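/- The traceless SU(2)-character variety of the twice-punctured torus restricted to classes with tr([A,B]) < 2 is homeomorphic to S² × S² minus the diagonal. Concretely: the set of conjugacy classes of quadruples (A,B,a,b) ∈ SU(2)⁴ with tr(a) = tr(b) = 0 and [A,B]ab = 1 and AB ≠ BA, under simultaneous conjugation, is homeomorphic to {(â, b̂') ∈ S² × S² : â ≠ b̂'} via [(A,B,a,b)] ↦ (â, -b̂) computed in the canonical representative. -/

import Mathlib

open Matrix

noncomputable section

def σx : Matrix (Fin 2) (Fin 2) ℂ := !![0, 1; 1, 0]
def σy : Matrix (Fin 2) (Fin 2) ℂ := !![0, -Complex.I; Complex.I, 0]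
def σz : Matrix (Fin 2) (Fin 2) ℂ := !![1, 0; 0, -1]

abbrev SU2 := Matrix.specialUnitaryGroup (Fin 2) ℂ

def dotPauli (v : Fin 3 → ℝ) : Matrix (Fin 2) (Fin 2) ℂ :=
  (v 0 : ℂ) • σx + (v 1 : ℂ) • σy + (v 2 : ℂ) • σz

def canonA (r α : ℝ) : Matrix (Fin 2) (Fin 2) ℂ :=
  ((r * Real.cos α : ℝ) : ℂ) • (1 : Matrix (Fin 2) (Fin 2) ℂ) +
    (Complex.I * ((Real.sqrt (1 - r ^ 2) : ℝ) : ℂ)) • σx +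
    (Complex.I * ((r * Real.sin α : ℝ) : ℂ)) • σz

def canonB (β : ℝ) : Matrix (Fin 2) (Fin 2) ℂ :=
  ((Real.cos β : ℝ) : ℂ) • (1 : Matrix (Fin 2) (Fin 2) ℂ) +
    (Complex.I * ((Real.sin β : ℝ) : ℂ)) • σz

/-- Quadruples `(A,B,a,b) ∈ SU(2)⁴` with `tr a = tr b = 0`, `[A,B]ab = 1`, `AB ≠ BA`. -/
def P4space : Type :=
  {q : SU2 × SU2 × SU2 × SU2 //
    Matrix.trace (q.2.2.1 : Matrix (Fin 2) (Fin 2) ℂ) = 0 ∧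
    Matrix.trace (q.2.2.2 : Matrix (Fin 2) (Fin 2) ℂ) = 0 ∧
    (q.1 : Matrix (Fin 2) (Fin 2) ℂ) * q.2.1 * (q.1 : Matrix (Fin 2) (Fin 2) ℂ)⁻¹ *
        (q.2.1 : Matrix (Fin 2) (Fin 2) ℂ)⁻¹ * q.2.2.1 * q.2.2.2 = 1 ∧
    (q.1 : Matrix (Fin 2) (Fin 2) ℂ) * q.2.1 ≠ (q.2.1 : Matrix (Fin 2) (Fin 2) ℂ) * q.1}

/-- Simultaneous conjugation relation on such quadruples. -/
def conjRel (q q' : P4space) : Prop :=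
  ∃ g : SU2,
    (g : Matrix (Fin 2) (Fin 2) ℂ) * q.1.1 * (g : Matrix (Fin 2) (Fin 2) ℂ)⁻¹ =
      (q'.1.1 : Matrix (Fin 2) (Fin 2) ℂ) ∧
    (g : Matrix (Fin 2) (Fin 2) ℂ) * q.1.2.1 * (g : Matrix (Fin 2) (Fin 2) ℂ)⁻¹ =
      (q'.1.2.1 : Matrix (Fin 2) (Fin 2) ℂ) ∧
    (g : Matrix (Fin 2) (Fin 2) ℂ) * q.1.2.2.1 * (g : Matrix (Fin 2) (Fin 2) ℂ)⁻¹ =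
      (q'.1.2.2.1 : Matrix (Fin 2) (Fin 2) ℂ) ∧
    (g : Matrix (Fin 2) (Fin 2) ℂ) * q.1.2.2.2 * (g : Matrix (Fin 2) (Fin 2) ℂ)⁻¹ =
      (q'.1.2.2.2 : Matrix (Fin 2) (Fin 2) ℂ)

/-- Pairs of distinct unit vectors in `S² × S²`. -/
def Target : Type :=
  {p : (Fin 3 → ℝ) × (Fin 3 → ℝ) //
    p.1 0 ^ 2 + p.1 1 ^ 2 + p.1 2 ^ 2 = 1 ∧
    p.2 0 ^ 2 + p.2 1 ^ 2 + p.2 2 ^ 2 = 1 ∧ p.1 ≠ p.2}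

instance : TopologicalSpace P4space := instTopologicalSpaceSubtype
instance : TopologicalSpace Target := instTopologicalSpaceSubtype

/-!
A non-commuting pair in `SU(2)` is conjugate to a canonical pair, and a canonical pair can be
recovered, continuously, from its commutator. In a quadruple the relation gives `[A, B] = (ab)⁻¹`,
so a quadruple in canonical form is determined by `(â, -b̂)`, and every pair of distinct unit
vectors occurs. This gives a continuous map from `Target` onto the conjugacy classes. For its
inverse, iterated brackets of `A` and `B` form an orthogonal frame of the traceless skew-Hermitian
matrices that is equivariant under conjugation, and that consists of positive multiples of `i σx`,
`i σy`, `i σz` for a canonical pair. Hence the normalized coordinates of `a` and `b` in this frame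
are invariant, continuous, and equal to `â` and `b̂` in the canonical representative.
-/

open ComplexConjugate Complex
open scoped Real commutatorElement

/-- The matrix with first row `(z, w)` in the parametrization of `SU(2)` by the unit sphere
of `ℂ²`. Without the normalization `|z|² + |w|² = 1` these matrices form the quaternions. -/
def cayleyKlein (z w : ℂ) : Matrix (Fin 2) (Fin 2) ℂ :=
  !![z, w; -conj w, conj z]

section CayleyKlein

variable {z w z' w' : ℂ}

lemma cayleyKlein_inj : cayleyKlein z w = cayleyKlein z' w' ↔ z = z' ∧ w = w' := by
  refine ⟨fun h => ⟨congrFun₂ h 0 0, congrFun₂ h 0 1⟩, ?_⟩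
  rintro ⟨rfl, rfl⟩
  rfl

lemma cayleyKlein_mul_cayleyKlein (z w z' w' : ℂ) :
    cayleyKlein z w * cayleyKlein z' w' =
      cayleyKlein (z * z' - w * conj w') (z * w' + w * conj z') := by
  simp only [cayleyKlein, mul_fin_two, map_add, map_sub, map_mul, conj_conj]
  ring_nf

lemma cayleyKlein_sub_cayleyKlein (z w z' w' : ℂ) :
    cayleyKlein z w - cayleyKlein z' w' = cayleyKlein (z - z') (w - w') := by
  ext i j
  fin_cases i <;> fin_cases j <;> simp [cayleyKlein, neg_add_eq_sub, sub_eq_add_neg]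

lemma cayleyKlein_one_zero : cayleyKlein 1 0 = 1 := by
  simp [cayleyKlein, one_fin_two]

lemma star_cayleyKlein (z w : ℂ) : star (cayleyKlein z w) = cayleyKlein (conj z) (-w) := by
  ext i j
  fin_cases i <;> fin_cases j <;> simp [cayleyKlein, star_apply]

lemma det_cayleyKlein (z w : ℂ) :
    (cayleyKlein z w).det = ((normSq z + normSq w : ℝ) : ℂ) := by
  simp [cayleyKlein, det_fin_two, Complex.mul_conj]

lemma trace_cayleyKlein (z w : ℂ) : (cayleyKlein z w).trace = (2 * z.re : ℝ) := by
  rw [cayleyKlein, trace_fin_two_of, add_conj]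

lemma commute_cayleyKlein_cayleyKlein_zero_iff {ζ : ℂ} :
    Commute (cayleyKlein z w) (cayleyKlein ζ 0) ↔ w = 0 ∨ ζ.im = 0 := by
  rw [commute_iff_eq, cayleyKlein_mul_cayleyKlein, cayleyKlein_mul_cayleyKlein, cayleyKlein_inj,
    ← conj_eq_iff_im, or_comm, ← mul_eq_mul_left_iff]
  simp [mul_comm]

lemma cayleyKlein_mem_specialUnitaryGroup_iff :
    cayleyKlein z w ∈ specialUnitaryGroup (Fin 2) ℂ ↔
      normSq z + normSq w = 1 := by
  rw [mem_specialUnitaryGroup_iff, det_cayleyKlein, Complex.ofReal_eq_one, and_iff_right_iff_imp]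
  intro h
  rw [mem_unitaryGroup_iff, star_cayleyKlein, cayleyKlein_mul_cayleyKlein, ← cayleyKlein_one_zero,
    cayleyKlein_inj]
  refine ⟨?_, by simp [mul_comm]⟩
  rw [map_neg, mul_neg, sub_neg_eq_add, Complex.mul_conj, Complex.mul_conj]
  exact_mod_cast h

lemma continuous_cayleyKlein {X : Type*} [TopologicalSpace X] {z w : X → ℂ} (hz : Continuous z)
    (hw : Continuous w) : Continuous fun x => cayleyKlein (z x) (w x) := by
  refine continuous_matrix fun i j => ?_
  fin_cases i <;> fin_cases j
  exacts [hz, hw, (continuous_conj.comp hw).neg, continuous_conj.comp hz]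

end CayleyKlein

lemma SU2.normSq_add_normSq {g : SU2} {z w : ℂ} (h : g.1 = cayleyKlein z w) :
    normSq z + normSq w = 1 :=
  cayleyKlein_mem_specialUnitaryGroup_iff.mp (h ▸ g.2)

lemma SU2.mul_conj_add_mul_conj {g : SU2} {z w : ℂ} (h : g.1 = cayleyKlein z w) :
    z * conj z + w * conj w = 1 := by
  rw [mul_conj, mul_conj]
  exact_mod_cast SU2.normSq_add_normSq h

/-- For a matrix in `SU(2)` the conjugate transpose and the adjugate are both the inverse. -/
lemma SU2.eq_cayleyKlein (g : SU2) : g.1 = cayleyKlein (g.1 0 0) (g.1 0 1) := by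
  have star_eq_adjugate : star g.1 = g.1.adjugate := calc
    star g.1 = star g.1 * (g.1 * g.1.adjugate) := by
      rw [mul_adjugate, (mem_specialUnitaryGroup_iff.mp g.2).2, one_smul, mul_one]
    _ = g.1.adjugate := by
      rw [← mul_assoc, mem_unitaryGroup_iff'.mp (mem_specialUnitaryGroup_iff.mp g.2).1, one_mul]
  rw [adjugate_fin_two] at star_eq_adjugate
  have h11 : conj (g.1 0 0) = g.1 1 1 := congrFun₂ star_eq_adjugate 0 0
  have h10 : conj (g.1 0 1) = -g.1 1 0 := congrFun₂ star_eq_adjugate 1 0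
  rw [cayleyKlein, h10, h11, neg_neg]
  exact eta_fin_two g.1

lemma SU2.ext_firstRow {g h : SU2} (hrow : g.1 0 = h.1 0) : g = h :=
  Subtype.ext <| by rw [SU2.eq_cayleyKlein g, SU2.eq_cayleyKlein h, hrow]

lemma SU2.exists_firstRow_eq_smul {v : Fin 2 → ℂ} (hv : v ≠ 0) :
    ∃ (g : SU2) (c : ℂ), g.1 0 = c • v := by
  set n : ℝ := normSq (v 0) + normSq (v 1) with hn
  have n_pos : 0 < n := by
    refine (add_nonneg (normSq_nonneg _) (normSq_nonneg _)).lt_of_ne fun h => hv ?_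
    obtain ⟨h₀, h₁⟩ := (add_eq_zero_iff_of_nonneg (normSq_nonneg _) (normSq_nonneg _)).mp h.symm
    ext i
    fin_cases i
    exacts [normSq_eq_zero.mp h₀, normSq_eq_zero.mp h₁]
  let c : ℂ := ((√n)⁻¹ : ℝ)
  have normSq_c : normSq c = n⁻¹ := by
    rw [normSq_ofReal, ← mul_inv, Real.mul_self_sqrt n_pos.le]
  refine ⟨⟨cayleyKlein (c * v 0) (c * v 1), cayleyKlein_mem_specialUnitaryGroup_iff.mpr ?_⟩, c, ?_⟩
  · rw [normSq_mul, normSq_mul, ← mul_add, ← hn, normSq_c, inv_mul_cancel₀ n_pos.ne']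
  · ext i
    fin_cases i <;> rfl

lemma SU2.coe_inv (g : SU2) : (g⁻¹ : SU2).1 = g.1⁻¹ :=
  (inv_eq_left_inv (congrArg Subtype.val (inv_mul_cancel g))).symm

lemma SU2.coe_conj (g X : SU2) : (g * X * g⁻¹).1 = g.1 * X.1 * g.1⁻¹ := by
  rw [← SU2.coe_inv]
  rfl

instance {n : Type*} [Fintype n] [DecidableEq n] : ContinuousInv (specialUnitaryGroup n ℂ) where
  continuous_inv := (continuous_star.comp continuous_subtype_val).subtype_mk _

/-! ### Reduction to canonical form -/

/-- The canonical form of a non-commuting pair, up to simultaneous conjugation: in the notation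
of `canonA` and `canonB`, `η = r e^{iα}`, `s = √(1 - r²)` and `ζ = e^{iβ}`. -/
def IsCanonicalPair (A B : SU2) : Prop :=
  ∃ (η ζ : ℂ) (s : ℝ), 0 < s ∧ 0 < ζ.im ∧ A.1 = cayleyKlein η (s * I) ∧ B.1 = cayleyKlein ζ 0

lemma exists_normSq_eq_one_sq_mul_eq_norm_mul_I (w : ℂ) :
    ∃ μ : ℂ, normSq μ = 1 ∧ μ ^ 2 * w = ‖w‖ * I := by
  refine ⟨exp (((π / 2 - w.arg) / 2 : ℝ) * I), ?_, ?_⟩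
  · rw [normSq_eq_norm_sq, norm_exp_ofReal_mul_I, one_pow]
  · calc exp (((π / 2 - w.arg) / 2 : ℝ) * I) ^ 2 * w
        = exp (((π / 2 - w.arg) / 2 : ℝ) * I) ^ 2 * (‖w‖ * exp (w.arg * I)) := by
          rw [norm_mul_exp_arg_mul_I]
      _ = ‖w‖ * exp (π / 2 * I) := by
          rw [← exp_nat_mul, mul_left_comm, ← exp_add]
          congr 2
          push_cast
          ring
      _ = ‖w‖ * I := by rw [exp_pi_div_two_mul_I]

lemma SU2.coe_conj_of_eq_cayleyKlein_zero {D X : SU2} {μ z w : ℂ} (hD : D.1 = cayleyKlein μ 0)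
    (hX : X.1 = cayleyKlein z w) : (D * X * D⁻¹).1 = cayleyKlein z (μ ^ 2 * w) := by
  have unit := SU2.mul_conj_add_mul_conj hD
  rw [zero_mul, add_zero] at unit
  change D.1 * X.1 * star D.1 = _
  rw [hD, hX, star_cayleyKlein, cayleyKlein_mul_cayleyKlein, cayleyKlein_mul_cayleyKlein,
    cayleyKlein_inj]
  simp only [map_zero, map_neg, conj_conj]
  exact ⟨by linear_combination z * unit, by ring⟩

lemma SU2.exists_vecMul_eq_smul (B : SU2) :
    ∃ (ζ : ℂ) (v : Fin 2 → ℂ), normSq ζ = 1 ∧ 0 ≤ ζ.im ∧ v ≠ 0 ∧ v ᵥ* B.1 = ζ • v := by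
  obtain ⟨z, w, hB⟩ : ∃ z w, B.1 = cayleyKlein z w := ⟨_, _, SU2.eq_cayleyKlein B⟩
  have unit := SU2.normSq_add_normSq hB
  have re_sq_le : z.re ^ 2 ≤ 1 := by
    rw [normSq_apply] at unit
    nlinarith [normSq_nonneg w]
  let ζ : ℂ := ⟨z.re, √(1 - z.re ^ 2)⟩
  have im_sq : ζ.im ^ 2 = 1 - z.re ^ 2 := Real.sq_sqrt (sub_nonneg.mpr re_sq_le)
  have char_eq : (B.1 - ζ • (1 : Matrix (Fin 2) (Fin 2) ℂ)).det = 0 := by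
    have im_sq' : (ζ.im : ℂ) ^ 2 = 1 - (z.re : ℂ) ^ 2 := by exact_mod_cast im_sq
    have z_add_conj : z + conj z = 2 * z.re := by rw [add_conj, ofReal_mul, ofReal_ofNat]
    have hζ : ζ = z.re + ζ.im * I := (re_add_im ζ).symm
    calc (B.1 - ζ • (1 : Matrix (Fin 2) (Fin 2) ℂ)).det
        = z * conj z + w * conj w - ζ * (z + conj z) + ζ ^ 2 := by
          have sub_eq : cayleyKlein z w - ζ • (1 : Matrix (Fin 2) (Fin 2) ℂ) =
              !![z - ζ, w; -conj w, conj z - ζ] := by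
            simp [cayleyKlein, one_fin_two]
          rw [hB, sub_eq, det_fin_two_of]
          ring
      _ = 0 := by
          rw [SU2.mul_conj_add_mul_conj hB, z_add_conj, hζ]
          linear_combination -im_sq' + (ζ.im : ℂ) ^ 2 * I_sq
  obtain ⟨v, v_ne, hv⟩ := exists_vecMul_eq_zero_iff.mpr char_eq
  refine ⟨ζ, v, ?_, Real.sqrt_nonneg _, v_ne, ?_⟩
  · rw [normSq_apply, ← sq, ← sq, im_sq]
    exact add_sub_cancel _ _
  · rwa [vecMul_sub, vecMul_smul, vecMul_one, sub_eq_zero] at hv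

/-- A left unit eigenvector of `B` is the first row of the conjugating matrix. -/
lemma SU2.exists_conj_eq_cayleyKlein_zero (B : SU2) :
    ∃ (g : SU2) (ζ : ℂ), 0 ≤ ζ.im ∧ (g * B * g⁻¹).1 = cayleyKlein ζ 0 := by
  obtain ⟨ζ, v, ζ_unit, ζ_im, v_ne, hv⟩ := SU2.exists_vecMul_eq_smul B
  obtain ⟨g, c, hg⟩ := SU2.exists_firstRow_eq_smul v_ne
  let D : SU2 := ⟨cayleyKlein ζ 0, cayleyKlein_mem_specialUnitaryGroup_iff.mpr (by simpa)⟩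
  have intertwine : g * B = D * g := SU2.ext_firstRow <| calc
    (g.1 * B.1) 0 = ζ • g.1 0 := by
      rw [mul_apply_eq_vecMul, hg, smul_vecMul, hv, smul_comm]
    _ = (D.1 * g.1) 0 := by
      ext j
      simp [D, cayleyKlein, mul_apply]
  exact ⟨g, ζ, ζ_im, congrArg Subtype.val (mul_inv_eq_of_eq_mul intertwine)⟩

lemma exists_isCanonicalPair_conj {A B : SU2} (hAB : ¬Commute A B) :
    ∃ g : SU2, IsCanonicalPair (g * A * g⁻¹) (g * B * g⁻¹) := by
  obtain ⟨g, ζ, ζ_im, hB⟩ := SU2.exists_conj_eq_cayleyKlein_zero B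
  obtain ⟨z, w, hA⟩ : ∃ z w, (g * A * g⁻¹).1 = cayleyKlein z w := ⟨_, _, SU2.eq_cayleyKlein _⟩
  have not_commute : ¬Commute (cayleyKlein z w) (cayleyKlein ζ 0) := by
    rw [← hA, ← hB]
    exact fun h => hAB ((Commute.conj_iff g).mp (Subtype.ext h))
  obtain ⟨w_ne, ζ_im_ne⟩ := not_or.mp (commute_cayleyKlein_cayleyKlein_zero_iff.not.mp not_commute)
  obtain ⟨μ, μ_unit, hμ⟩ := exists_normSq_eq_one_sq_mul_eq_norm_mul_I w
  let D : SU2 := ⟨cayleyKlein μ 0, cayleyKlein_mem_specialUnitaryGroup_iff.mpr (by simpa)⟩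
  have conj_eq (X : SU2) : D * g * X * (D * g)⁻¹ = D * (g * X * g⁻¹) * D⁻¹ := by group
  refine ⟨D * g, z, ζ, ‖w‖, norm_pos_iff.mpr w_ne, ζ_im.lt_of_ne' ζ_im_ne, ?_, ?_⟩
  · rw [conj_eq, SU2.coe_conj_of_eq_cayleyKlein_zero rfl hA, hμ]
  · rw [conj_eq, SU2.coe_conj_of_eq_cayleyKlein_zero rfl hB, mul_zero]

/-! ### Canonical pairs with a given commutator -/

lemma SU2.coe_commutator {A B : SU2} {η ζ : ℂ} {s : ℝ} (hA : A.1 = cayleyKlein η (s * I))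
    (hB : B.1 = cayleyKlein ζ 0) :
    ⁅A, B⁆.1 = cayleyKlein (1 - (2 * ζ.im * s ^ 2 : ℝ) * (I * conj ζ))
      ((2 * ζ.im * s : ℝ) * (η * ζ)) := by
  have η_unit : η * conj η + s ^ 2 = 1 := by
    have unit := SU2.mul_conj_add_mul_conj hA
    rw [map_mul, conj_ofReal, conj_I] at unit
    linear_combination unit + s ^ 2 * I_sq
  have ζ_unit : ζ * conj ζ = 1 := by
    simpa using SU2.mul_conj_add_mul_conj hB
  have ζ_sub_conj : ζ - conj ζ = 2 * ζ.im * I := by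
    rw [sub_conj, ofReal_mul, ofReal_ofNat]
  change A.1 * B.1 * star A.1 * star B.1 = _
  rw [hA, hB, star_cayleyKlein, star_cayleyKlein]
  simp only [cayleyKlein_mul_cayleyKlein, cayleyKlein_inj, map_zero, map_neg, map_mul, conj_I,
    conj_ofReal, conj_conj, ofReal_mul, ofReal_pow, ofReal_ofNat]
  constructor
  · linear_combination ζ * conj ζ * η_unit + ζ_unit - s ^ 2 * conj ζ ^ 2 * I_sq
      - s ^ 2 * conj ζ * ζ_sub_conj
  · linear_combination -s * I * η * ζ * ζ_sub_conj - 2 * ζ.im * s * η * ζ * I_sq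

/-- The deviation `1 - C₀₀` of a matrix in `SU(2)` from the identity; its real part is
`1 - tr C / 2`. -/
def SU2.deviation (C : SU2) : ℂ := 1 - C.1 0 0

lemma SU2.normSq_deviation_add_normSq (C : SU2) :
    normSq (SU2.deviation C) + normSq (C.1 0 1) = 2 * (SU2.deviation C).re := by
  have unit := SU2.normSq_add_normSq (SU2.eq_cayleyKlein C)
  rw [normSq_apply] at unit ⊢
  simp only [SU2.deviation, sub_re, sub_im, one_re, one_im]
  linear_combination unit

lemma SU2.deviation_re_pos {C : SU2} (hC : C ≠ 1) : 0 < (SU2.deviation C).re := by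
  have norm_eq := SU2.normSq_deviation_add_normSq C
  have nonneg : 0 ≤ (SU2.deviation C).re := by
    linarith [normSq_nonneg (SU2.deviation C), normSq_nonneg (C.1 0 1)]
  refine nonneg.lt_of_ne' fun h => hC ?_
  rw [h, mul_zero, add_eq_zero_iff_of_nonneg (normSq_nonneg _) (normSq_nonneg _), normSq_eq_zero,
    normSq_eq_zero, SU2.deviation, sub_eq_zero] at norm_eq
  refine SU2.ext_firstRow (funext fun i => ?_)
  fin_cases i
  exacts [norm_eq.1.symm, norm_eq.2]

lemma SU2.norm_deviation_pos {C : SU2} (hC : C ≠ 1) : 0 < ‖SU2.deviation C‖ :=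
  norm_pos_iff.mpr fun h => (SU2.deviation_re_pos hC).ne' (by rw [h, zero_re])

/-- The eigenvalue `ζ` of `B` in the canonical pair `(A, B)` with commutator `C`. By
`SU2.coe_commutator`, the deviation of `C` is a positive multiple of `i ζ̄`. -/
def eigenvalueOfCommutator (C : SU2) : ℂ := I * conj (SU2.deviation C) / ‖SU2.deviation C‖

/-- The number `2 s Im ζ` attached to the canonical pair with commutator `C`, in the notation of
`IsCanonicalPair`. -/
def scaleOfCommutator (C : SU2) : ℝ := √(2 * (SU2.deviation C).re)

lemma normSq_eigenvalueOfCommutator {C : SU2} (hC : C ≠ 1) :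
    normSq (eigenvalueOfCommutator C) = 1 := by
  rw [eigenvalueOfCommutator, normSq_div, normSq_mul, normSq_I, one_mul, normSq_conj,
    normSq_ofReal, normSq_eq_norm_sq, sq,
    div_self (mul_self_pos.mpr (SU2.norm_deviation_pos hC).ne').ne']

lemma eigenvalueOfCommutator_ne_zero {C : SU2} (hC : C ≠ 1) : eigenvalueOfCommutator C ≠ 0 := by
  rw [← normSq_pos, normSq_eigenvalueOfCommutator hC]
  exact one_pos

lemma im_eigenvalueOfCommutator (C : SU2) :
    (eigenvalueOfCommutator C).im = (SU2.deviation C).re / ‖SU2.deviation C‖ := by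
  rw [eigenvalueOfCommutator, div_ofReal_im, I_mul_im, conj_re]

lemma I_mul_conj_eigenvalueOfCommutator (C : SU2) :
    I * conj (eigenvalueOfCommutator C) = SU2.deviation C / ‖SU2.deviation C‖ := by
  simp only [eigenvalueOfCommutator, map_div₀, map_mul, conj_I, conj_conj, conj_ofReal]
  linear_combination -(SU2.deviation C / ‖SU2.deviation C‖) * I_sq

lemma scaleOfCommutator_pos {C : SU2} (hC : C ≠ 1) : 0 < scaleOfCommutator C :=
  Real.sqrt_pos.mpr (mul_pos two_pos (SU2.deviation_re_pos hC))

lemma scaleOfCommutator_sq {C : SU2} (hC : C ≠ 1) :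
    scaleOfCommutator C ^ 2 = 2 * (SU2.deviation C).re :=
  Real.sq_sqrt (mul_pos two_pos (SU2.deviation_re_pos hC)).le

lemma normSq_div_add_normSq_div_scaleOfCommutator {C : SU2} (hC : C ≠ 1) :
    normSq (C.1 0 1 / (scaleOfCommutator C * eigenvalueOfCommutator C)) +
      normSq ((‖SU2.deviation C‖ / scaleOfCommutator C : ℝ) * I) = 1 := by
  have scale_sq_ne := pow_ne_zero 2 (scaleOfCommutator_pos hC).ne'
  rw [normSq_div, normSq_mul, normSq_mul, normSq_I, mul_one, normSq_eigenvalueOfCommutator hC,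
    mul_one, normSq_ofReal, normSq_ofReal, ← sq, ← sq, div_pow, ← add_div,
    div_eq_one_iff_eq scale_sq_ne, scaleOfCommutator_sq hC, ← SU2.normSq_deviation_add_normSq,
    normSq_eq_norm_sq (SU2.deviation C), add_comm]

/-- The canonical pair whose commutator is `C`, obtained by solving `SU2.coe_commutator` for
`ζ`, `s` and `η`. -/
def pairOfCommutator (C : {C : SU2 // C ≠ 1}) : SU2 × SU2 :=
  (⟨cayleyKlein (C.1.1 0 1 / (scaleOfCommutator C * eigenvalueOfCommutator C))
      ((‖SU2.deviation C‖ / scaleOfCommutator C : ℝ) * I),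
    cayleyKlein_mem_specialUnitaryGroup_iff.mpr
      (normSq_div_add_normSq_div_scaleOfCommutator C.2)⟩,
   ⟨cayleyKlein (eigenvalueOfCommutator C) 0,
    cayleyKlein_mem_specialUnitaryGroup_iff.mpr
      (by rw [normSq_eigenvalueOfCommutator C.2, normSq_zero, add_zero])⟩)

lemma isCanonicalPair_pairOfCommutator (C : {C : SU2 // C ≠ 1}) :
    IsCanonicalPair (pairOfCommutator C).1 (pairOfCommutator C).2 := by
  refine ⟨_, _, _, ?_, ?_, rfl, rfl⟩
  · exact div_pos (SU2.norm_deviation_pos C.2) (scaleOfCommutator_pos C.2)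
  · rw [im_eigenvalueOfCommutator]
    exact div_pos (SU2.deviation_re_pos C.2) (SU2.norm_deviation_pos C.2)

lemma commutator_pairOfCommutator (C : {C : SU2 // C ≠ 1}) :
    ⁅(pairOfCommutator C).1, (pairOfCommutator C).2⁆ = C := by
  have δ_pos := SU2.norm_deviation_pos C.2
  have scale_pos := scaleOfCommutator_pos C.2
  have scale_sq := scaleOfCommutator_sq C.2
  have ζ_ne := eigenvalueOfCommutator_ne_zero C.2
  have coeff_diag : 2 * ((SU2.deviation C).re / ‖SU2.deviation C‖) *
      (‖SU2.deviation C‖ / scaleOfCommutator C) ^ 2 = ‖SU2.deviation C‖ := by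
    rw [div_pow, scale_sq]
    have re_pos := SU2.deviation_re_pos C.2
    field_simp
  have coeff_off : 2 * ((SU2.deviation C).re / ‖SU2.deviation C‖) *
      (‖SU2.deviation C‖ / scaleOfCommutator C) = scaleOfCommutator C := by
    field_simp
    exact scale_sq.symm
  have first_row :
      ⁅(pairOfCommutator C).1, (pairOfCommutator C).2⁆.1 = cayleyKlein (C.1.1 0 0) (C.1.1 0 1) := by
    rw [SU2.coe_commutator rfl rfl, im_eigenvalueOfCommutator, I_mul_conj_eigenvalueOfCommutator,
      coeff_diag, coeff_off, cayleyKlein_inj]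
    constructor
    · rw [mul_div_cancel₀ _ (ofReal_ne_zero.mpr δ_pos.ne'), SU2.deviation]
      exact sub_sub_cancel _ _
    · have scale_ne := ofReal_ne_zero.mpr scale_pos.ne'
      field_simp
  exact Subtype.ext (first_row.trans (SU2.eq_cayleyKlein C.1).symm)

lemma IsCanonicalPair.pairOfCommutator_eq {A B : SU2} (h : IsCanonicalPair A B)
    (hC : ⁅A, B⁆ ≠ 1) : pairOfCommutator ⟨⁅A, B⁆, hC⟩ = (A, B) := by
  obtain ⟨η, ζ, s, s_pos, ζ_im, hA, hB⟩ := h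
  have commutator_eq := SU2.coe_commutator hA hB
  have δ_eq : SU2.deviation ⁅A, B⁆ = (2 * ζ.im * s ^ 2 : ℝ) * (I * conj ζ) := by
    rw [SU2.deviation, commutator_eq]
    exact sub_sub_cancel _ _
  have w_eq : ⁅A, B⁆.1 0 1 = (2 * ζ.im * s : ℝ) * (η * ζ) := congrFun₂ commutator_eq 0 1
  have ζ_norm : ‖ζ‖ = 1 := by
    have unit := SU2.normSq_add_normSq hB
    rwa [normSq_zero, add_zero, normSq_eq_norm_sq,
      pow_eq_one_iff_of_nonneg (norm_nonneg ζ) two_ne_zero] at unit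
  have δ_norm : ‖SU2.deviation ⁅A, B⁆‖ = 2 * ζ.im * s ^ 2 := by
    rw [δ_eq, norm_mul, norm_mul, norm_I, RCLike.norm_conj, ζ_norm, mul_one, mul_one, norm_real,
      Real.norm_of_nonneg (by positivity)]
  have scale_eq : scaleOfCommutator ⁅A, B⁆ = 2 * ζ.im * s := by
    rw [scaleOfCommutator, δ_eq, re_ofReal_mul, I_mul_re, conj_im, neg_neg,
      Real.sqrt_eq_iff_mul_self_eq_of_pos (by positivity)]
    ring
  have eigenvalue_eq : eigenvalueOfCommutator ⁅A, B⁆ = ζ := by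
    rw [eigenvalueOfCommutator, δ_norm, δ_eq, div_eq_iff (ofReal_ne_zero.mpr (by positivity))]
    simp only [map_mul, conj_ofReal, conj_I, conj_conj]
    linear_combination -(2 * ζ.im * s ^ 2 : ℝ) * ζ * I_sq
  refine Prod.ext (Subtype.ext ?_) (Subtype.ext ?_)
  · have scale_ne : ((2 * ζ.im * s : ℝ) : ℂ) ≠ 0 := ofReal_ne_zero.mpr (by positivity)
    have ζ_ne : ζ ≠ 0 := norm_ne_zero_iff.mp (ζ_norm ▸ one_ne_zero)
    rw [hA, pairOfCommutator, cayleyKlein_inj, scale_eq, eigenvalue_eq, δ_norm, w_eq]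
    constructor
    · rw [mul_left_comm, mul_div_cancel_right₀ _ (mul_ne_zero scale_ne ζ_ne)]
    · congr 2
      field_simp
  · rw [hB, ← eigenvalue_eq]
    rfl

lemma continuous_pairOfCommutator : Continuous pairOfCommutator := by
  have δ_ne (C : {C : SU2 // C ≠ 1}) : (‖SU2.deviation C‖ : ℂ) ≠ 0 :=
    ofReal_ne_zero.mpr (SU2.norm_deviation_pos C.2).ne'
  have scale_ne (C : {C : SU2 // C ≠ 1}) := (scaleOfCommutator_pos C.2).ne'
  have entry (j : Fin 2) : Continuous fun C : {C : SU2 // C ≠ 1} => C.1.1 0 j :=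
    (continuous_subtype_val.comp continuous_subtype_val).matrix_elem 0 j
  have deviation : Continuous fun C : {C : SU2 // C ≠ 1} => SU2.deviation C :=
    continuous_const.sub (entry 0)
  have scale : Continuous fun C : {C : SU2 // C ≠ 1} => scaleOfCommutator C :=
    ((continuous_re.comp deviation).const_mul 2).sqrt
  have eigenvalue : Continuous fun C : {C : SU2 // C ≠ 1} => eigenvalueOfCommutator C :=
    (continuous_const.mul (continuous_conj.comp deviation)).div
      (continuous_ofReal.comp deviation.norm) δ_ne
  refine .prodMk (.subtype_mk (continuous_cayleyKlein ?_ ?_) _)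
    (.subtype_mk (continuous_cayleyKlein eigenvalue continuous_const) _)
  · exact (entry 1).div ((continuous_ofReal.comp scale).mul eigenvalue) fun C =>
      mul_ne_zero (ofReal_ne_zero.mpr (scale_ne C)) (eigenvalueOfCommutator_ne_zero C.2)
  · exact (continuous_ofReal.comp (deviation.norm.div scale scale_ne)).mul continuous_const

/-! ### Frames attached to non-commuting pairs -/

lemma I_smul_dotPauli (v : Fin 3 → ℝ) :
    I • dotPauli v = cayleyKlein (v 2 * I) (v 1 + v 0 * I) := by
  simp [dotPauli, σx, σy, σz, cayleyKlein, mul_comm I, add_mul, mul_assoc, add_comm]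

/-- Minus half the real part of the trace form, normalized so that `v ↦ I • dotPauli v` is an
isometry from `ℝ³`. -/
def tracePairing (X Y : Matrix (Fin 2) (Fin 2) ℂ) : ℝ := -(X * Y).trace.re / 2

lemma tracePairing_I_smul_dotPauli (v w : Fin 3 → ℝ) :
    tracePairing (I • dotPauli v) (I • dotPauli w) = v ⬝ᵥ w := by
  have re_eq : (v 2 * I * (w 2 * I) - (v 1 + v 0 * I) * conj ((w 1 : ℂ) + w 0 * I)).re =
      -(v 0 * w 0 + v 1 * w 1 + v 2 * w 2) := by
    simp only [map_add, map_mul, conj_ofReal, conj_I, sub_re, add_re, add_im, mul_re, mul_im,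
      neg_re, neg_im, ofReal_re, ofReal_im, I_re, I_im]
    ring
  rw [tracePairing, I_smul_dotPauli, I_smul_dotPauli, cayleyKlein_mul_cayleyKlein,
    trace_cayleyKlein, ofReal_re, re_eq, vec3_dotProduct]
  ring

lemma tracePairing_conj {P : Matrix (Fin 2) (Fin 2) ℂ} (hP : IsUnit P)
    (X Y : Matrix (Fin 2) (Fin 2) ℂ) :
    tracePairing (P * X * P⁻¹) (P * Y * P⁻¹) = tracePairing X Y := by
  have conj_mul_conj : P * X * P⁻¹ * (P * Y * P⁻¹) = P * (X * Y) * P⁻¹ := by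
    simp only [mul_assoc, nonsing_inv_mul_cancel_left P _ ((isUnit_iff_isUnit_det P).mp hP)]
  rw [tracePairing, tracePairing, conj_mul_conj, trace_conj hP]

/-- Three brackets in `A` and `B`, the first two generating the third. For a canonical pair in
`SU(2)` they are positive multiples of `i σx`, `i σy` and `i σz`. -/
def bracketFrame {R : Type*} [Ring R] (A B : R) : Fin 3 → R :=
  ![⁅B, ⁅A, B⁆⁆, ⁅A, B⁆, ⁅⁅A, B⁆, ⁅B, ⁅A, B⁆⁆⁆]

lemma bracketFrame_map {R S : Type*} [Ring R] [Ring S] (f : R →+* S) (A B : R) (i : Fin 3) :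
    bracketFrame (f A) (f B) i = f (bracketFrame A B i) := by
  fin_cases i <;> simp [bracketFrame, Ring.lie_def]

lemma bracketFrame_conj {n R : Type*} [Fintype n] [DecidableEq n] [CommRing R] {P : Matrix n n R}
    (hP : IsUnit P) (A B : Matrix n n R) (i : Fin 3) :
    bracketFrame (P * A * P⁻¹) (P * B * P⁻¹) i = P * bracketFrame A B i * P⁻¹ := by
  obtain ⟨u, rfl⟩ := hP
  rw [← coe_units_inv]
  exact bracketFrame_map (MulSemiringAction.toRingHom (ConjAct (Matrix n n R)ˣ) (Matrix n n R)
    (ConjAct.toConjAct u)) A B i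

/-- The coordinates of `X` along the normalized brackets of `A` and `B`, in the pairing
`tracePairing`. They are the coordinates of `X` when the brackets are orthogonal and span the
traceless skew-Hermitian matrices, as for non-commuting `A` and `B` in `SU(2)`. -/
def frameCoords (A B X : Matrix (Fin 2) (Fin 2) ℂ) (i : Fin 3) : ℝ :=
  tracePairing X (bracketFrame A B i) /
    √(tracePairing (bracketFrame A B i) (bracketFrame A B i))

lemma frameCoords_conj {P : Matrix (Fin 2) (Fin 2) ℂ} (hP : IsUnit P)
    (A B X : Matrix (Fin 2) (Fin 2) ℂ) :
    frameCoords (P * A * P⁻¹) (P * B * P⁻¹) (P * X * P⁻¹) = frameCoords A B X := by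
  ext i
  simp only [frameCoords, bracketFrame_conj hP, tracePairing_conj hP]

lemma lie_cayleyKlein (z w z' w' : ℂ) :
    ⁅cayleyKlein z w, cayleyKlein z' w'⁆ =
      cayleyKlein (2 * (w' * conj w).im * I) (2 * I * (z.im * w' - z'.im * w)) := by
  have sub_conj_eq (x : ℂ) : x - conj x = 2 * x.im * I := by
    rw [sub_conj, ofReal_mul, ofReal_ofNat]
  rw [Ring.lie_def, cayleyKlein_mul_cayleyKlein, cayleyKlein_mul_cayleyKlein,
    cayleyKlein_sub_cayleyKlein, cayleyKlein_inj, ← sub_conj_eq, map_mul, conj_conj]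
  refine ⟨by ring, ?_⟩
  linear_combination w' * sub_conj_eq z - w * sub_conj_eq z'

lemma bracketFrame_cayleyKlein (η ζ : ℂ) (s : ℝ) :
    bracketFrame (cayleyKlein η (s * I)) (cayleyKlein ζ 0) = fun i => I • dotPauli
      (Pi.single i (![4 * s * ζ.im ^ 2, 2 * s * ζ.im, 16 * s ^ 2 * ζ.im ^ 3] i)) := by
  have hY : ⁅cayleyKlein η (s * I), cayleyKlein ζ 0⁆ = cayleyKlein 0 (2 * s * ζ.im : ℝ) := by
    rw [lie_cayleyKlein, cayleyKlein_inj]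
    push_cast
    exact ⟨by simp, by linear_combination -2 * s * ζ.im * I_sq⟩
  have hX : ⁅cayleyKlein ζ 0, cayleyKlein 0 (2 * s * ζ.im : ℝ)⁆ =
      cayleyKlein 0 ((4 * s * ζ.im ^ 2 : ℝ) * I) := by
    rw [lie_cayleyKlein, cayleyKlein_inj]
    push_cast
    exact ⟨by simp, by rw [zero_im, ofReal_zero]; ring⟩
  have hZ : ⁅cayleyKlein 0 (2 * s * ζ.im : ℝ), cayleyKlein 0 ((4 * s * ζ.im ^ 2 : ℝ) * I)⁆ =
      cayleyKlein ((16 * s ^ 2 * ζ.im ^ 3 : ℝ) * I) 0 := by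
    rw [lie_cayleyKlein, cayleyKlein_inj, conj_ofReal, im_mul_ofReal, im_ofReal_mul, I_im]
    push_cast
    exact ⟨by ring, by simp⟩
  rw [bracketFrame, hY, hX, hZ]
  ext1 i
  fin_cases i <;> simp [I_smul_dotPauli]

lemma IsCanonicalPair.exists_bracketFrame_eq {A B : SU2} (h : IsCanonicalPair A B) (i : Fin 3) :
    ∃ k : ℝ, 0 < k ∧ bracketFrame A.1 B.1 i = I • dotPauli (Pi.single i k) := by
  obtain ⟨η, ζ, s, s_pos, ζ_im, hA, hB⟩ := h
  refine ⟨![4 * s * ζ.im ^ 2, 2 * s * ζ.im, 16 * s ^ 2 * ζ.im ^ 3] i, ?_, ?_⟩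
  · fin_cases i
    exacts [show 0 < 4 * s * ζ.im ^ 2 by positivity, show 0 < 2 * s * ζ.im by positivity,
      show 0 < 16 * s ^ 2 * ζ.im ^ 3 by positivity]
  · rw [hA, hB, bracketFrame_cayleyKlein]

lemma IsCanonicalPair.frameCoords_I_smul_dotPauli {A B : SU2} (h : IsCanonicalPair A B)
    (v : Fin 3 → ℝ) : frameCoords A.1 B.1 (I • dotPauli v) = v := by
  ext i
  obtain ⟨k, k_pos, hk⟩ := h.exists_bracketFrame_eq i
  rw [frameCoords, hk, tracePairing_I_smul_dotPauli, tracePairing_I_smul_dotPauli,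
    dotProduct_single, dotProduct_single, Pi.single_eq_same, Real.sqrt_mul_self k_pos.le,
    mul_div_cancel_right₀ _ k_pos.ne']

lemma SU2.isUnit_coe (g : SU2) : IsUnit g.1 :=
  (Group.isUnit g).map (specialUnitaryGroup (Fin 2) ℂ).subtype

lemma tracePairing_bracketFrame_self_pos {A B : SU2} (hAB : ¬Commute A B) (i : Fin 3) :
    0 < tracePairing (bracketFrame A.1 B.1 i) (bracketFrame A.1 B.1 i) := by
  obtain ⟨g, hg⟩ := exists_isCanonicalPair_conj hAB
  obtain ⟨k, k_pos, hk⟩ := hg.exists_bracketFrame_eq i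
  rw [SU2.coe_conj, SU2.coe_conj, bracketFrame_conj (SU2.isUnit_coe g)] at hk
  rw [← tracePairing_conj (SU2.isUnit_coe g), hk, tracePairing_I_smul_dotPauli,
    dotProduct_single, Pi.single_eq_same]
  exact mul_pos k_pos k_pos

lemma continuous_tracePairing {T : Type*} [TopologicalSpace T]
    {X Y : T → Matrix (Fin 2) (Fin 2) ℂ} (hX : Continuous X) (hY : Continuous Y) :
    Continuous fun t => tracePairing (X t) (Y t) :=
  (continuous_re.comp (hX.matrix_mul hY).matrix_trace).neg.div_const 2

lemma continuous_bracketFrame {R T : Type*} [Ring R] [TopologicalSpace R] [IsTopologicalRing R]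
    [TopologicalSpace T] {A B : T → R} (hA : Continuous A) (hB : Continuous B) (i : Fin 3) :
    Continuous fun t => bracketFrame (A t) (B t) i := by
  have lie {X Y : T → R} (hX : Continuous X) (hY : Continuous Y) :
      Continuous fun t => ⁅X t, Y t⁆ := (hX.mul hY).sub (hY.mul hX)
  have second := lie hA hB
  have first := lie hB second
  fin_cases i
  exacts [first, second, lie second first]

lemma continuous_frameCoords {T : Type*} [TopologicalSpace T]
    {A B X : T → Matrix (Fin 2) (Fin 2) ℂ} (hA : Continuous A) (hB : Continuous B)
    (hX : Continuous X)
    (hpos : ∀ t i, 0 < tracePairing (bracketFrame (A t) (B t) i) (bracketFrame (A t) (B t) i)) :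
    Continuous fun t => frameCoords (A t) (B t) (X t) := by
  refine continuous_pi fun i => ?_
  have frame := continuous_bracketFrame hA hB i
  exact (continuous_tracePairing hX frame).div (continuous_tracePairing frame frame).sqrt fun t =>
    (Real.sqrt_pos.mpr (hpos t i)).ne'

/-! ### Traceless elements of `SU(2)` -/

lemma I_smul_dotPauli_inj {v w : Fin 3 → ℝ} :
    I • dotPauli v = I • dotPauli w ↔ v = w := by
  refine ⟨fun h => ?_, congrArg fun u => I • dotPauli u⟩
  rw [I_smul_dotPauli, I_smul_dotPauli, cayleyKlein_inj] at h
  ext i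
  fin_cases i
  · simpa using congrArg im h.2
  · simpa using congrArg re h.2
  · simpa using congrArg im h.1

lemma trace_I_smul_dotPauli (v : Fin 3 → ℝ) : (I • dotPauli v).trace = 0 := by
  rw [I_smul_dotPauli, trace_cayleyKlein, re_ofReal_mul, I_re, mul_zero, mul_zero, ofReal_zero]

lemma SU2.trace_inv_eq_zero {g : SU2} (hg : g.1.trace = 0) : (g⁻¹).1.trace = 0 := by
  change g.1ᴴ.trace = 0
  rw [trace_conjTranspose, hg, star_zero]

lemma SU2.exists_eq_I_smul_dotPauli {g : SU2} (hg : g.1.trace = 0) :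
    ∃ v : Fin 3 → ℝ, g.1 = I • dotPauli v := by
  refine ⟨![(g.1 0 1).im, (g.1 0 1).re, (g.1 0 0).im], ?_⟩
  have re_eq_zero : (g.1 0 0).re = 0 := by
    rwa [SU2.eq_cayleyKlein g, trace_cayleyKlein, ofReal_eq_zero,
      mul_eq_zero_iff_left two_ne_zero] at hg
  rw [I_smul_dotPauli, SU2.eq_cayleyKlein g, cayleyKlein_inj]
  constructor
  · exact Complex.ext (by simpa [cayleyKlein] using re_eq_zero) (by simp [cayleyKlein])
  · exact (re_add_im _).symm

lemma I_smul_dotPauli_mem_specialUnitaryGroup_iff {v : Fin 3 → ℝ} :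
    I • dotPauli v ∈ specialUnitaryGroup (Fin 2) ℂ ↔ v 0 ^ 2 + v 1 ^ 2 + v 2 ^ 2 = 1 := by
  rw [I_smul_dotPauli, cayleyKlein_mem_specialUnitaryGroup_iff, normSq_add_mul_I, normSq_mul,
    normSq_I, normSq_ofReal]
  ring_nf

/-- The sphere `S²`, cut out by the equation that occurs in `Target`. -/
abbrev UnitVector : Type := {v : Fin 3 → ℝ // v 0 ^ 2 + v 1 ^ 2 + v 2 ^ 2 = 1}

/-- The traceless element `i v·σ` of `SU(2)`. -/
def tracelessOfUnitVector (v : UnitVector) : SU2 :=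
  ⟨I • dotPauli v, I_smul_dotPauli_mem_specialUnitaryGroup_iff.mpr v.2⟩

lemma tracelessOfUnitVector_injective : Function.Injective tracelessOfUnitVector := fun _ _ h =>
  Subtype.ext (I_smul_dotPauli_inj.mp (congrArg Subtype.val h))

lemma exists_tracelessOfUnitVector_eq {g : SU2} (hg : g.1.trace = 0) :
    ∃ v, tracelessOfUnitVector v = g := by
  obtain ⟨v, hv⟩ := SU2.exists_eq_I_smul_dotPauli hg
  exact ⟨⟨v, I_smul_dotPauli_mem_specialUnitaryGroup_iff.mp (hv ▸ g.2)⟩, Subtype.ext hv.symm⟩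

lemma coe_inv_tracelessOfUnitVector (v : UnitVector) :
    ((tracelessOfUnitVector v)⁻¹).1 = I • dotPauli (-v) := by
  change star (I • dotPauli v) = _
  rw [I_smul_dotPauli, I_smul_dotPauli, star_cayleyKlein, cayleyKlein_inj]
  simp [add_comm]

lemma continuous_tracelessOfUnitVector : Continuous tracelessOfUnitVector := by
  have coord (i : Fin 3) : Continuous fun v : UnitVector => (v.1 i : ℂ) :=
    continuous_ofReal.comp ((continuous_apply i).comp continuous_subtype_val)
  refine Continuous.subtype_mk ?_ _
  simp only [I_smul_dotPauli]
  exact continuous_cayleyKlein ((coord 2).mul_const I) ((coord 1).add ((coord 0).mul_const I))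

/-! ### The quotient by conjugation -/

lemma P4space.commutator_mul_mul (q : P4space) :
    ⁅q.1.1, q.1.2.1⁆ * q.1.2.2.1 * q.1.2.2.2 = 1 := by
  have relation := q.2.2.2.1
  rw [← SU2.coe_inv, ← SU2.coe_inv] at relation
  exact Subtype.ext relation

lemma P4space.not_commute (q : P4space) : ¬Commute q.1.1 q.1.2.1 := fun h =>
  q.2.2.2.2 (congrArg Subtype.val h)

/-- Constructor for `P4space` whose conditions on `A`, `B`, `a`, `b` are stated in the group `SU2`
instead of in the matrix ring. -/
def P4space.mk (A B a b : SU2) (ha : a.1.trace = 0) (hb : b.1.trace = 0)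
    (relation : ⁅A, B⁆ * a * b = 1) (not_commute : ¬Commute A B) : P4space :=
  ⟨(A, B, a, b), ha, hb, by
    rw [← SU2.coe_inv, ← SU2.coe_inv]
    exact congrArg Subtype.val relation, fun h => not_commute (Subtype.ext h)⟩

/-- Simultaneous conjugation of a quadruple by `g`. -/
def P4space.conj (g : SU2) (q : P4space) : P4space :=
  P4space.mk (g * q.1.1 * g⁻¹) (g * q.1.2.1 * g⁻¹) (g * q.1.2.2.1 * g⁻¹) (g * q.1.2.2.2 * g⁻¹)
    (by rw [SU2.coe_conj, trace_conj (SU2.isUnit_coe g), q.2.1])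
    (by rw [SU2.coe_conj, trace_conj (SU2.isUnit_coe g), q.2.2.1])
    (by
      rw [← conjugate_commutatorElement, conj_mul, conj_mul, q.commutator_mul_mul, mul_one,
        mul_inv_cancel])
    fun h => q.not_commute ((Commute.conj_iff g).mp h)

lemma conjRel_conj (g : SU2) (q : P4space) : conjRel q (q.conj g) :=
  ⟨g, (SU2.coe_conj ..).symm, (SU2.coe_conj ..).symm, (SU2.coe_conj ..).symm,
    (SU2.coe_conj ..).symm⟩

namespace Target

/-- The vector `â` of a point `(â, -b̂)` of `Target`. -/
def first (p : Target) : UnitVector := ⟨p.1.1, p.2.1⟩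

/-- The vector `-b̂` of a point `(â, -b̂)` of `Target`. -/
def second (p : Target) : UnitVector := ⟨p.1.2, p.2.2.1⟩

lemma continuous_first : Continuous first :=
  (continuous_fst.comp continuous_subtype_val).subtype_mk _

lemma continuous_second : Continuous second :=
  (continuous_snd.comp continuous_subtype_val).subtype_mk _

lemma second_ne_first (p : Target) : p.second ≠ p.first := fun h =>
  p.2.2.2 (congrArg Subtype.val h).symm

/-- The commutator `[A, B] = (ab)⁻¹` forced by the values of `a` and `b` at a point of `Target`. -/
def commutator (p : Target) : {C : SU2 // C ≠ 1} :=
  ⟨tracelessOfUnitVector p.second * (tracelessOfUnitVector p.first)⁻¹, fun h =>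
    p.second_ne_first (tracelessOfUnitVector_injective (mul_inv_eq_one.mp h))⟩

/-- The quadruple in canonical form over a point `(â, -b̂)` of `Target`. -/
def toP4space (p : Target) : P4space :=
  P4space.mk (pairOfCommutator p.commutator).1 (pairOfCommutator p.commutator).2
    (tracelessOfUnitVector p.first) (tracelessOfUnitVector p.second)⁻¹ (trace_I_smul_dotPauli _)
    (by rw [coe_inv_tracelessOfUnitVector, trace_I_smul_dotPauli])
    (by rw [commutator_pairOfCommutator, commutator, inv_mul_cancel_right, mul_inv_cancel])
    fun h => p.commutator.2 <| (commutator_pairOfCommutator _).symm.trans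
      (commutatorElement_eq_one_iff_commute.mpr h)

lemma continuous_commutator : Continuous commutator :=
  ((continuous_tracelessOfUnitVector.comp continuous_second).mul
    (continuous_tracelessOfUnitVector.comp continuous_first).inv).subtype_mk _

lemma continuous_toP4space : Continuous toP4space := by
  have pair := continuous_pairOfCommutator.comp continuous_commutator
  have a := continuous_tracelessOfUnitVector.comp continuous_first
  have b := (continuous_tracelessOfUnitVector.comp continuous_second).inv
  exact (pair.fst.prodMk (pair.snd.prodMk (a.prodMk b))).subtype_mk _

end Target

namespace P4space

/-- The pair `(â, -b̂)` of a quadruple. Here `â` and `b̂` are measured in the frame attached to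
`(A, B)`, so that no conjugation to canonical form is needed. -/
def coords (q : P4space) : (Fin 3 → ℝ) × (Fin 3 → ℝ) :=
  (frameCoords q.1.1.1 q.1.2.1.1 q.1.2.2.1.1, -frameCoords q.1.1.1 q.1.2.1.1 q.1.2.2.2.1)

lemma coords_eq_of_conjRel {q q' : P4space} (h : conjRel q q') : q.coords = q'.coords := by
  obtain ⟨g, hA, hB, ha, hb⟩ := h
  simp only [coords, ← hA, ← hB, ← ha, ← hb, frameCoords_conj (SU2.isUnit_coe g)]

lemma coords_eq_of_isCanonicalPair {q : P4space} (h : IsCanonicalPair q.1.1 q.1.2.1)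
    {v w : Fin 3 → ℝ} (ha : q.1.2.2.1.1 = I • dotPauli v) (hb : q.1.2.2.2.1 = I • dotPauli w) :
    q.coords = (v, -w) := by
  rw [coords, ha, hb, h.frameCoords_I_smul_dotPauli, h.frameCoords_I_smul_dotPauli]

lemma continuous_coords : Continuous coords := by
  have quadruple : Continuous fun q : P4space => q.1 := continuous_subtype_val
  have A : Continuous fun q : P4space => q.1.1.1 := continuous_subtype_val.comp quadruple.fst
  have B : Continuous fun q : P4space => q.1.2.1.1 :=
    continuous_subtype_val.comp quadruple.snd.fst
  have a : Continuous fun q : P4space => q.1.2.2.1.1 :=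
    continuous_subtype_val.comp quadruple.snd.snd.fst
  have b : Continuous fun q : P4space => q.1.2.2.2.1 :=
    continuous_subtype_val.comp quadruple.snd.snd.snd
  have frame_pos (q : P4space) := tracePairing_bracketFrame_self_pos q.not_commute
  exact (continuous_frameCoords A B a frame_pos).prodMk
    (continuous_frameCoords A B b frame_pos).neg

lemma coords_toP4space (p : Target) : coords (Target.toP4space p) = p.1 := by
  rw [coords_eq_of_isCanonicalPair (isCanonicalPair_pairOfCommutator _) rfl
    (coe_inv_tracelessOfUnitVector _), neg_neg]
  rfl

lemma exists_toP4space_eq {q : P4space} (h : IsCanonicalPair q.1.1 q.1.2.1) :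
    ∃ p, Target.toP4space p = q := by
  obtain ⟨x, hx⟩ := exists_tracelessOfUnitVector_eq q.2.1
  obtain ⟨y, hy⟩ := exists_tracelessOfUnitVector_eq (SU2.trace_inv_eq_zero q.2.2.1)
  have commutator_eq :
      ⁅q.1.1, q.1.2.1⁆ = tracelessOfUnitVector y * (tracelessOfUnitVector x)⁻¹ := by
    rw [hx, hy, ← _root_.mul_inv_rev, eq_inv_iff_mul_eq_one, ← mul_assoc, q.commutator_mul_mul]
  have commutator_ne : ⁅q.1.1, q.1.2.1⁆ ≠ 1 := fun hC =>
    q.not_commute (commutatorElement_eq_one_iff_commute.mp hC)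
  have x_ne_y : x.1 ≠ y.1 := fun hxy => commutator_ne <| by
    rw [commutator_eq, Subtype.ext hxy, mul_inv_cancel]
  let p : Target := ⟨(x.1, y.1), x.2, y.2, x_ne_y⟩
  have pair_eq : pairOfCommutator (Target.commutator p) = (q.1.1, q.1.2.1) := by
    rw [← h.pairOfCommutator_eq commutator_ne]
    exact congrArg _ (Subtype.ext commutator_eq.symm)
  have b_eq : (tracelessOfUnitVector y)⁻¹ = q.1.2.2.2 := by rw [hy, inv_inv]
  exact ⟨p, Subtype.ext <| Prod.ext (congrArg Prod.fst pair_eq :) <|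
    Prod.ext (congrArg Prod.snd pair_eq :) <| Prod.ext hx b_eq⟩

lemma exists_conjRel_toP4space (q : P4space) : ∃ p, conjRel q (Target.toP4space p) := by
  obtain ⟨g, canonical⟩ := exists_isCanonicalPair_conj q.not_commute
  obtain ⟨p, hp⟩ := exists_toP4space_eq (q := q.conj g) canonical
  exact ⟨p, hp ▸ conjRel_conj g q⟩

/-- `P4space.coords` as a map to `Target`. -/
def toTarget (q : P4space) : Target :=
  ⟨q.coords, by
    obtain ⟨p, hp⟩ := q.exists_conjRel_toP4space
    rw [coords_eq_of_conjRel hp, coords_toP4space]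
    exact p.2⟩

end P4space

/-- The homeomorphism `[(A, B, a, b)] ↦ (â, -b̂)`; the inverse is the class of the quadruple in
canonical form. -/
def quotConjRelHomeomorph : Quot conjRel ≃ₜ Target where
  toFun := Quot.lift P4space.toTarget fun _ _ h => Subtype.ext (P4space.coords_eq_of_conjRel h)
  invFun p := Quot.mk conjRel p.toP4space
  left_inv := by
    rintro ⟨q⟩
    obtain ⟨p, hp⟩ := q.exists_conjRel_toP4space
    have toTarget_eq : q.toTarget = p := Subtype.ext <|
      (P4space.coords_eq_of_conjRel hp).trans (P4space.coords_toP4space p)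
    change Quot.mk conjRel (Target.toP4space q.toTarget) = Quot.mk conjRel q
    rw [toTarget_eq, Quot.sound hp]
  right_inv p := Subtype.ext (P4space.coords_toP4space p)
  continuous_toFun := continuous_quot_lift _ (P4space.continuous_coords.subtype_mk _)
  continuous_invFun := continuous_quot_mk.comp Target.continuous_toP4space

lemma canonA_eq_cayleyKlein (r α : ℝ) :
    canonA r α = cayleyKlein (r * Real.cos α + r * Real.sin α * I) (√(1 - r ^ 2) * I) := by
  simp [canonA, σx, σz, cayleyKlein, one_fin_two, mul_comm I, sub_eq_add_neg, -ofReal_cos,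
    -ofReal_sin]

lemma canonB_eq_cayleyKlein (β : ℝ) :
    canonB β = cayleyKlein (Real.cos β + Real.sin β * I) 0 := by
  simp [canonB, σz, cayleyKlein, one_fin_two, mul_comm I, -ofReal_cos, -ofReal_sin]

lemma isCanonicalPair_of_eq_canon {A B : SU2} {r α β : ℝ} (hr : r ∈ Set.Ico (0 : ℝ) 1)
    (hβ : β ∈ Set.Ioo (0 : ℝ) π) (hA : A.1 = canonA r α) (hB : B.1 = canonB β) :
    IsCanonicalPair A B := by
  refine ⟨_, _, _, ?_, ?_, hA.trans (canonA_eq_cayleyKlein r α),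
    hB.trans (canonB_eq_cayleyKlein β)⟩
  · exact Real.sqrt_pos.mpr (sub_pos.mpr (pow_lt_one₀ hr.1 hr.2 two_ne_zero))
  · simpa [← ofReal_cos, ← ofReal_sin] using Real.sin_pos_of_mem_Ioo hβ

/-- The piece of the traceless character variety of the twice-punctured torus with
`AB ≠ BA` is homeomorphic to `S² × S²` minus the diagonal, via `[(A,B,a,b)] ↦ (â,-b̂)`
computed in the canonical representative. -/
theorem P4_homeomorph_sphere_sq_minus_diagonal :
    ∃ F : Quot conjRel ≃ₜ Target,
      ∀ (q : P4space) (r α β : ℝ) (va vb : Fin 3 → ℝ),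
        r ∈ Set.Ico (0 : ℝ) 1 → β ∈ Set.Ioo (0 : ℝ) Real.pi →
        (q.1.1 : Matrix (Fin 2) (Fin 2) ℂ) = canonA r α →
        (q.1.2.1 : Matrix (Fin 2) (Fin 2) ℂ) = canonB β →
        (q.1.2.2.1 : Matrix (Fin 2) (Fin 2) ℂ) = Complex.I • dotPauli va →
        (q.1.2.2.2 : Matrix (Fin 2) (Fin 2) ℂ) = Complex.I • dotPauli vb →
        (F (Quot.mk conjRel q)).1 = (va, -vb) := by
  exact ⟨quotConjRelHomeomorph, fun q r α β va vb hr hβ hA hB ha hb =>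
    P4space.coords_eq_of_isCanonicalPair (isCanonicalPair_of_eq_canon hr hβ hA hB) ha hb⟩
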